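/- Let M be a ℤ-module, B : M × M → ℤ a ℤ-bilinear form, t₁, …, t_l ∈ M and ε₁, …, ε_l ∈ {1, −1}. For each k let τ_k : M → M be the map τ_k(x) = x + ε_k · B(t_k, x) · t_k. Then for every a ∈ M the composition Φ = τ_l ∘ ⋯ ∘ τ₁ satisfies Φ(a) = a + Σ_{m=1}^{l} Σ_{1 ≤ k₁ < k₂ < ⋯ < k_m ≤ l} ε_{k₁}⋯ε_{k_m} · B(t_{k_m}, t_{k_{m−1}}) · B(t_{k_{m−1}}, t_{k_{m−2}}) ⋯ B(t_{k₂}, t_{k₁}) · B(t_{k₁}, a) · t_{k_m} (where for m = 1 the empty product of factors B(t_{k_j}, t_{k_{j−1}}) is 1). -/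

import Mathlib

theorem strictMono_sum_split {A : Type*} [AddCommMonoid A] (l m : ℕ)
    (F : (Fin (m + 1) → Fin (l + 1)) → A) :
    ∑ k ∈ Finset.univ.filter (fun k : Fin (m + 1) → Fin (l + 1) => StrictMono k), F k =
      (∑ k ∈ Finset.univ.filter (fun k : Fin (m + 1) → Fin l => StrictMono k),
        F (fun j => (k j).castSucc)) +
      ∑ k ∈ Finset.univ.filter (fun k : Fin m → Fin l => StrictMono k),
        F (Fin.snoc (α := fun _ => Fin (l + 1)) (fun j => (k j).castSucc) (Fin.last l)) := by
  rw [← Finset.sum_filter_not_add_sum_filter _ (fun k => k (Fin.last m) = Fin.last l)]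
  congr 1
  · symm
    refine Finset.sum_bij (fun k _ j => (k j).castSucc) ?_ ?_ ?_ ?_
    · intro k hk
      simp only [Finset.mem_filter, Finset.mem_univ, true_and] at hk ⊢
      exact ⟨fun i j hij => Fin.castSucc_lt_castSucc_iff.2 (hk hij), Fin.castSucc_ne_last _⟩
    · intro k _ k' _ h
      funext j
      exact Fin.castSucc_injective _ (congrFun h j)
    · intro k hk
      simp only [Finset.mem_filter, Finset.mem_univ, true_and] at hk
      have hne : ∀ j, k j ≠ Fin.last l := fun j h => by
        have h1 := hk.1.monotone (Fin.le_last j)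
        rw [h] at h1
        exact hk.2 (Fin.last_le_iff.1 h1)
      refine ⟨fun j => (k j).castPred (hne j), ?_, ?_⟩
      · simp only [Finset.mem_filter, Finset.mem_univ, true_and]
        intro i j hij
        exact Fin.castPred_lt_castPred_iff.2 (hk.1 hij)
      · funext j
        simp
    · intro k _
      rfl
  · symm
    refine Finset.sum_bij (fun k _ => Fin.snoc (α := fun _ => Fin (l + 1))
      (fun j => (k j).castSucc) (Fin.last l)) ?_ ?_ ?_ ?_
    · intro k hk
      simp only [Finset.mem_filter, Finset.mem_univ, true_and] at hk ⊢
      refine ⟨?_, by simp⟩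
      intro i j hij
      induction j using Fin.lastCases with
      | last =>
        induction i using Fin.lastCases with
        | last => exact absurd hij (lt_irrefl _)
        | cast i => simp [Fin.castSucc_lt_last]
      | cast j =>
        induction i using Fin.lastCases with
        | last => exact absurd hij (not_lt.2 (Fin.le_last _))
        | cast i => simpa using hk (Fin.castSucc_lt_castSucc_iff.1 hij)
    · intro k _ k' _ h
      funext j
      have := congrFun h j.castSucc
      simpa using this
    · intro k hk
      simp only [Finset.mem_filter, Finset.mem_univ, true_and] at hk
      have hne : ∀ j : Fin m, k j.castSucc ≠ Fin.last l := fun j h => by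
        have h1 := hk.1 (Fin.castSucc_lt_last j)
        rw [h] at h1
        exact absurd h1 (not_lt.2 (Fin.le_last _))
      refine ⟨fun j => (k j.castSucc).castPred (hne j), ?_, ?_⟩
      · simp only [Finset.mem_filter, Finset.mem_univ, true_and]
        intro i j hij
        exact Fin.castPred_lt_castPred_iff.2 (hk.1 (Fin.castSucc_lt_castSucc_iff.2 hij))
      · funext j
        induction j using Fin.lastCases with
        | last => simp [hk.2]
        | cast j => simp
    · intro k _
      rfl

/-- For a ℤ-bilinear form `B` on a ℤ-module `M`, elements
`t₁, …, t_l`, signs `ε₁, …, ε_l ∈ {1, -1}` and the "twist" maps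
`τ_k (x) = x + ε_k ⬝ B(t_k, x) ⬝ t_k`, the composition `Φ = τ_l ∘ ⋯ ∘ τ₁`
satisfies
`Φ(a) = a + Σ_{m=1}^{l} Σ_{1 ≤ k₁ < ⋯ < k_m ≤ l} ε_{k₁}⋯ε_{k_m}
  B(t_{k_m}, t_{k_{m-1}}) ⋯ B(t_{k₂}, t_{k₁}) B(t_{k₁}, a) ⬝ t_{k_m}`.
Strictly increasing tuples `1 ≤ k₁ < ⋯ < k_m ≤ l` of length `m = m' + 1`
(with `m' ∈ {0, …, l-1}`) are encoded as strictly monotone maps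
`k : Fin (m' + 1) → Fin l`. -/
theorem thurston_bennequin_dehn_twist_composition
    {M : Type*} [AddCommGroup M] [Module ℤ M]
    (B : M →ₗ[ℤ] M →ₗ[ℤ] ℤ) (l : ℕ) (t : Fin l → M) (ε : Fin l → ℤ)
    (hε : ∀ k, ε k = 1 ∨ ε k = -1)
    (τ : Fin l → M → M)
    (hτ : ∀ k x, τ k x = x + (ε k * B (t k) x) • t k)
    (a : M) :
    (List.ofFn τ).foldl (fun x f => f x) a =
      a + ∑ m ∈ Finset.range l,
        ∑ k ∈ Finset.univ.filter (fun k : Fin (m + 1) → Fin l => StrictMono k),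
          ((∏ j, ε (k j)) *
            (∏ i : Fin m, B (t (k i.succ)) (t (k i.castSucc))) *
            B (t (k 0)) a) • t (k (Fin.last m)) := by
  clear hε
  rename_i instG instM
  obtain rfl : instM = AddCommGroup.toIntModule M := Subsingleton.elim _ _
  induction l with
  | zero => simp
  | succ l ih =>
    have ih' := ih (fun j => t j.castSucc) (fun j => ε j.castSucc) (fun j => τ j.castSucc)
      (fun k x => hτ _ x)
    rw [List.ofFn_succ', List.concat_eq_append, List.foldl_append, ih']
    simp only [List.foldl_cons, List.foldl_nil]
    rw [hτ]
    simp only [strictMono_sum_split]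
    rw [Finset.sum_add_distrib, add_assoc]
    congr 1
    congr 1
    · rw [Finset.sum_range_succ]
      have : (Finset.univ.filter (fun k : Fin (l + 1) → Fin l => StrictMono k)) = ∅ := by
        refine Finset.filter_eq_empty_iff.2 fun k _ hk => ?_
        have := Fintype.card_le_of_injective k hk.injective
        simp at this
      rw [this, Finset.sum_empty, add_zero]
    · rw [Finset.sum_range_succ']
      have h0 : (Finset.univ.filter (fun k : Fin 0 → Fin l => StrictMono k)) = Finset.univ :=
        Finset.filter_true_of_mem fun k _ i => i.elim0
      rw [map_add, mul_add, add_smul, add_comm]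
      congr 1
      · rw [map_sum, Finset.mul_sum, Finset.sum_smul]
        refine Finset.sum_congr rfl fun m _ => ?_
        rw [map_sum, Finset.mul_sum, Finset.sum_smul]
        refine Finset.sum_congr rfl fun k _ => ?_
        rw [map_zsmul, Fin.prod_univ_castSucc (n := m + 1), Fin.prod_univ_castSucc (n := m) (fun i => B (t (Fin.snoc
          (α := fun _ => Fin (l + 1)) (fun j => (k j).castSucc) (Fin.last l) i.succ)) _)]
        have hz : (0 : Fin (m + 1 + 1)) = Fin.castSucc 0 := rfl
        rw [hz]
        simp only [Fin.snoc_castSucc, Fin.snoc_last, Fin.succ_last, Fin.succ_castSucc,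
          smul_eq_mul]
        congr 1
        ring
      · rw [h0]
        simp [Fin.snoc]
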